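/- arXiv:1104.3046 — 2 statements merged into one kernel-verified Lean document; each statement's English description precedes it below -/
import Mathlib

section
/- Let G be a simple graph on n vertices whose algebraic connectivity (second smallest Laplacian eigenvalue) λ₁ satisfies λ₁ ≥ σn for some σ > 0. Then there is a constant c_∞ > 0 depending only on σ such that ‖Q̂^{-1}‖_∞ ≤ c_∞/n, where Q̂ = Q + J and J is the all-ones matrix. -/
open Matrix

/-! With `M = Q + J`, the spectral gap makes `M` coercive: `M ≥ c` with `c = min(σ, 1) n`.
Suppose `‖M x‖_∞ ≤ 1`. Testing the equation against `x` and applying Cauchy–Schwarz gives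
`∑ |x i| ≤ n / c`, which is bounded independently of `n`. Since the off-diagonal entries of `M`
lie in `[0, 1]`, they contribute at most `n / c` to the `j`-th equation, so the diagonal entry
`M j j ≥ c` forces `|x j| ≤ (1 + n / c) / c`, which is of order `1 / n`. -/

section Coercive

variable {ι : Type*} [Fintype ι]

/-- Coercivity of the quadratic form of a square real matrix, with constant `c`: every `x` satisfies
`c |x|² ≤ xᵀ A x` for the Euclidean norm. Neither symmetry of `A` nor positivity of `c` is built
in. -/
def CoerciveWith (c : ℝ) (A : Matrix ι ι ℝ) : Prop :=
  ∀ x : ι → ℝ, c * (x ⬝ᵥ x) ≤ x ⬝ᵥ A *ᵥ x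

theorem sq_sum_abs_le_card_mul_dotProduct_self (x : ι → ℝ) :
    (∑ i, |x i|) ^ 2 ≤ Fintype.card ι * (x ⬝ᵥ x) := by
  simpa [dotProduct, sq] using
    sq_sum_le_card_mul_sum_sq (s := Finset.univ) (f := fun i ↦ |x i|)

theorem dotProduct_le_sum_abs_mul_norm (x y : ι → ℝ) : x ⬝ᵥ y ≤ (∑ i, |x i|) * ‖y‖ := by
  rw [dotProduct, Finset.sum_mul]
  refine Finset.sum_le_sum fun i _ ↦ (le_abs_self _).trans ?_
  rw [abs_mul]
  exact mul_le_mul_of_nonneg_left (norm_le_pi_norm y i) (abs_nonneg _)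

variable {A : Matrix ι ι ℝ} {b c : ℝ}

theorem abs_diag_mul_apply_le (hb : 0 ≤ b) {j : ι} (hA : ∀ k, k ≠ j → |A j k| ≤ b) (x : ι → ℝ) :
    |A j j * x j| ≤ ‖A *ᵥ x‖ + b * ∑ k, |x k| := by
  classical
  have row_eq : A j j * x j = (A *ᵥ x) j - ∑ k ∈ Finset.univ.erase j, A j k * x k := by
    rw [eq_sub_iff_add_eq]
    exact Finset.add_sum_erase _ (fun k ↦ A j k * x k) (Finset.mem_univ j)
  have off_diag_le : |∑ k ∈ Finset.univ.erase j, A j k * x k| ≤ b * ∑ k, |x k| :=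
    calc |∑ k ∈ Finset.univ.erase j, A j k * x k|
        ≤ ∑ k ∈ Finset.univ.erase j, |A j k * x k| := Finset.abs_sum_le_sum_abs _ _
      _ ≤ ∑ k ∈ Finset.univ.erase j, b * |x k| := Finset.sum_le_sum fun k hk ↦ by
          rw [abs_mul]
          exact mul_le_mul_of_nonneg_right (hA k (Finset.ne_of_mem_erase hk)) (abs_nonneg _)
      _ ≤ ∑ k, b * |x k| :=
          Finset.sum_le_univ_sum_of_nonneg fun k ↦ mul_nonneg hb (abs_nonneg _)
      _ = b * ∑ k, |x k| := (Finset.mul_sum _ _ _).symm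
  rw [row_eq]
  exact (abs_sub _ _).trans (add_le_add (norm_le_pi_norm (A *ᵥ x) j) off_diag_le)

namespace CoerciveWith

theorem le_diag (h : CoerciveWith c A) (i : ι) : c ≤ A i i := by
  classical
  simpa using h (Pi.single i 1)

theorem sum_abs_le (h : CoerciveWith c A) (hc : 0 < c) (x : ι → ℝ) :
    ∑ i, |x i| ≤ Fintype.card ι / c * ‖A *ᵥ x‖ := by
  obtain hS | hS := (Finset.sum_nonneg fun i _ ↦ abs_nonneg (x i) : 0 ≤ ∑ i, |x i|).eq_or_lt
  · rw [← hS]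
    positivity
  rw [div_mul_eq_mul_div, le_div_iff₀ hc]
  refine le_of_mul_le_mul_right ?_ hS
  calc (∑ i, |x i|) * c * ∑ i, |x i|
      = c * (∑ i, |x i|) ^ 2 := by ring
    _ ≤ c * (Fintype.card ι * (x ⬝ᵥ x)) := by
        gcongr
        exact sq_sum_abs_le_card_mul_dotProduct_self x
    _ = Fintype.card ι * (c * (x ⬝ᵥ x)) := by ring
    _ ≤ Fintype.card ι * ((∑ i, |x i|) * ‖A *ᵥ x‖) :=
        mul_le_mul_of_nonneg_left ((h x).trans (dotProduct_le_sum_abs_mul_norm x _))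
          (Nat.cast_nonneg _)
    _ = Fintype.card ι * ‖A *ᵥ x‖ * ∑ i, |x i| := by ring

theorem norm_le (h : CoerciveWith c A) (hc : 0 < c) (hb : 0 ≤ b)
    (hA : ∀ j k, k ≠ j → |A j k| ≤ b) (x : ι → ℝ) :
    ‖x‖ ≤ (1 + b * (Fintype.card ι / c)) / c * ‖A *ᵥ x‖ := by
  refine (pi_norm_le_iff_of_nonneg (by positivity)).2 fun j ↦ ?_
  rw [Real.norm_eq_abs, div_mul_eq_mul_div, le_div_iff₀' hc]
  calc c * |x j|
      ≤ |A j j| * |x j| := by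
        gcongr
        exact (h.le_diag j).trans (le_abs_self _)
    _ = |A j j * x j| := (abs_mul _ _).symm
    _ ≤ ‖A *ᵥ x‖ + b * ∑ k, |x k| := abs_diag_mul_apply_le hb (hA j) x
    _ ≤ ‖A *ᵥ x‖ + b * (Fintype.card ι / c * ‖A *ᵥ x‖) := by
        gcongr
        exact h.sum_abs_le hc x
    _ = (1 + b * (Fintype.card ι / c)) * ‖A *ᵥ x‖ := by ring

theorem isUnit_det [DecidableEq ι] (h : CoerciveWith c A) (hc : 0 < c) : IsUnit A.det := by
  rw [isUnit_iff_ne_zero, Ne, ← exists_mulVec_eq_zero_iff]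
  rintro ⟨x, hx, hAx⟩
  have sq_pos : 0 < x ⬝ᵥ x :=
    (dotProduct_star_self_nonneg x).lt_of_ne' (dotProduct_self_eq_zero.not.2 hx)
  have := h x
  rw [hAx, dotProduct_zero] at this
  exact this.not_gt (mul_pos hc sq_pos)

end CoerciveWith

end Coercive

section InftyOperatorNorm

open scoped Matrix.Norms.Operator

theorem sum_norm_row_le_linfty_opNorm {m n α : Type*} [Fintype m] [Fintype n]
    [SeminormedAddCommGroup α] (A : Matrix m n α) (i : m) : ∑ j, ‖A i j‖ ≤ ‖A‖ := by
  have row_le : ∑ j, ‖A i j‖₊ ≤ ‖A‖₊ := by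
    rw [linfty_opNNNorm_def]
    exact Finset.le_sup (f := fun i ↦ ∑ j, ‖A i j‖₊) (Finset.mem_univ i)
  simpa using NNReal.coe_le_coe.2 row_le

theorem CoerciveWith.linfty_opNorm_inv_le {ι : Type*} [Fintype ι] [DecidableEq ι]
    {A : Matrix ι ι ℝ} {b c : ℝ} (h : CoerciveWith c A) (hc : 0 < c) (hb : 0 ≤ b)
    (hA : ∀ j k, k ≠ j → |A j k| ≤ b) :
    ‖A⁻¹‖ ≤ (1 + b * (Fintype.card ι / c)) / c := by
  rw [linfty_opNorm_eq_opNorm]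
  refine ContinuousLinearMap.opNorm_le_bound _ (by positivity) fun f ↦ ?_
  simpa [mulVec_mulVec, mul_nonsing_inv _ (h.isUnit_det hc)] using h.norm_le hc hb hA (A⁻¹ *ᵥ f)

end InftyOperatorNorm

section AllOnes

open scoped BigOperators

variable {ι R : Type*} [Fintype ι] [CommRing R]

theorem dotProduct_allOnes_mulVec (x : ι → R) :
    x ⬝ᵥ (Matrix.of fun (_ _ : ι) ↦ (1 : R)) *ᵥ x = (∑ i, x i) ^ 2 := by
  simp [dotProduct, mulVec, ← Finset.sum_mul, sq]

variable [Module ℚ≥0 R]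

theorem eq_balance_add_expect_smul_one (x : ι → R) :
    x = Fintype.balance x + (𝔼 i, x i) • (1 : ι → R) := by
  ext i
  simp [Fintype.balance_apply]

theorem dotProduct_self_eq_balance_add (x : ι → R) :
    x ⬝ᵥ x = Fintype.balance x ⬝ᵥ Fintype.balance x + Fintype.card ι * (𝔼 i, x i) ^ 2 := by
  conv_lhs => rw [eq_balance_add_expect_smul_one x]
  simp only [add_dotProduct, dotProduct_add, smul_dotProduct, dotProduct_smul, dotProduct_one,
    one_dotProduct, Pi.add_apply, Pi.smul_apply, Pi.one_apply, Finset.sum_add_distrib,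
    Fintype.sum_balance, Finset.sum_const, Finset.card_univ, nsmul_eq_mul, smul_eq_mul]
  ring

theorem dotProduct_mulVec_eq_balance {Q : Matrix ι ι R} (hQ : Q *ᵥ 1 = 0) (hQ' : 1 ᵥ* Q = 0)
    (x : ι → R) : x ⬝ᵥ Q *ᵥ x = Fintype.balance x ⬝ᵥ Q *ᵥ Fintype.balance x := by
  conv_lhs => rw [eq_balance_add_expect_smul_one x]
  rw [mulVec_add, mulVec_smul, hQ, smul_zero, add_zero, add_dotProduct, smul_dotProduct,
    dotProduct_mulVec 1, hQ', zero_dotProduct, smul_zero, add_zero]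

theorem CoerciveWith.add_allOnes {Q : Matrix ι ι ℝ} {a c : ℝ} (hQ : Q *ᵥ 1 = 0) (hQ' : 1 ᵥ* Q = 0)
    (hgap : ∀ x : ι → ℝ, ∑ i, x i = 0 → a * (x ⬝ᵥ x) ≤ x ⬝ᵥ Q *ᵥ x)
    (hca : c ≤ a) (hc : c ≤ Fintype.card ι) :
    CoerciveWith c (Q + Matrix.of fun (_ _ : ι) ↦ (1 : ℝ)) := by
  intro x
  set y := Fintype.balance x
  set m := 𝔼 i, x i
  calc c * (x ⬝ᵥ x)
      = c * (y ⬝ᵥ y) + c * (Fintype.card ι * m ^ 2) := by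
        rw [dotProduct_self_eq_balance_add, mul_add]
    _ ≤ a * (y ⬝ᵥ y) + Fintype.card ι * (Fintype.card ι * m ^ 2) := by
        have : 0 ≤ y ⬝ᵥ y := dotProduct_star_self_nonneg y
        gcongr
    _ ≤ y ⬝ᵥ Q *ᵥ y + (∑ i, x i) ^ 2 := by
        rw [← Fintype.card_mul_expect x, mul_pow, sq (Fintype.card ι : ℝ), mul_assoc]
        gcongr
        exact hgap y (Fintype.sum_balance x)
    _ = x ⬝ᵥ (Q + Matrix.of fun (_ _ : ι) ↦ (1 : ℝ)) *ᵥ x := by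
        rw [add_mulVec, dotProduct_add, dotProduct_mulVec_eq_balance hQ hQ' x,
          dotProduct_allOnes_mulVec]

end AllOnes

section Laplacian

variable {V : Type*} [Fintype V] [DecidableEq V] (G : SimpleGraph V) [DecidableRel G.Adj]

theorem one_vecMul_lapMatrix {R : Type*} [CommRing R] : 1 ᵥ* G.lapMatrix R = 0 := by
  rw [← mulVec_transpose, (G.isSymm_lapMatrix R).eq]
  exact G.lapMatrix_mulVec_const_eq_zero

theorem abs_lapMatrix_add_allOnes_apply_le_one {j k : V} (hkj : k ≠ j) :
    |(G.lapMatrix ℝ + Matrix.of fun (_ _ : V) ↦ (1 : ℝ)) j k| ≤ 1 := by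
  by_cases hadj : G.Adj j k <;>
    simp [SimpleGraph.lapMatrix, SimpleGraph.degMatrix, hkj.symm, hadj]

theorem stmt_2_general {σ : ℝ} (hσ : 0 < σ)
    (hgap : ∀ x : V → ℝ, ∑ i, x i = 0 →
      σ * Fintype.card V * (x ⬝ᵥ x) ≤ x ⬝ᵥ G.lapMatrix ℝ *ᵥ x) (j : V) :
    ∑ k, |(G.lapMatrix ℝ + Matrix.of fun (_ _ : V) ↦ (1 : ℝ))⁻¹ j k| ≤
      (1 + 1 / min σ 1) / min σ 1 / Fintype.card V := by
  have hn : (0 : ℝ) < Fintype.card V := Nat.cast_pos.2 (Fintype.card_pos_iff.2 ⟨j⟩)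
  have hs : 0 < min σ 1 := lt_min hσ one_pos
  have coercive : CoerciveWith (min σ 1 * Fintype.card V)
      (G.lapMatrix ℝ + Matrix.of fun (_ _ : V) ↦ (1 : ℝ)) :=
    .add_allOnes G.lapMatrix_mulVec_const_eq_zero (one_vecMul_lapMatrix G) hgap
      (by gcongr; exact min_le_left σ 1) (mul_le_of_le_one_left hn.le (min_le_right σ 1))
  refine (sum_norm_row_le_linfty_opNorm _ j).trans <|
    (coercive.linfty_opNorm_inv_le (mul_pos hs hn) zero_le_one fun _ _ ↦
      abs_lapMatrix_add_allOnes_apply_le_one G).trans_eq ?_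
  field_simp

end Laplacian

/-- If the algebraic connectivity of a simple graph `G` on `n` vertices satisfies
`λ₁ ≥ σ n` (expressed via the quadratic form of the Laplacian on the orthogonal
complement of the all-ones vector), then `‖(Q+J)⁻¹‖_∞ ≤ c_∞ / n` for a constant
`c_∞ > 0` depending only on `σ`. -/
theorem stmt_2 (σ : ℝ) (hσ : 0 < σ) :
    ∃ c : ℝ, 0 < c ∧
      ∀ (n : ℕ) (G : SimpleGraph (Fin n)) (_ : DecidableRel G.Adj),
        (∀ x : Fin n → ℝ, (∑ i, x i) = 0 →
          σ * n * (x ⬝ᵥ x) ≤ x ⬝ᵥ (G.lapMatrix ℝ).mulVec x) →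
        ∀ j, ∑ k, |(G.lapMatrix ℝ + (Matrix.of fun _ _ => (1 : ℝ) : Matrix (Fin n) (Fin n) ℝ))⁻¹ j k| ≤ c / n := by
  refine ⟨(1 + 1 / min σ 1) / min σ 1, by positivity, fun n G _ hgap j ↦ ?_⟩
  simpa only [Fintype.card_fin] using
    stmt_2_general G hσ (by simpa only [Fintype.card_fin] using hgap) j
end

section
/- Let w_{jk} (1 ≤ j, k ≤ n, j ≠ k) be arbitrary scalars, and define the n×n matrix A by A_{jk} = -w_{jk} for j ≠ k and A_{jj} = Σ_{r≠j} w_{jr}. For any r with 1 ≤ r ≤ n, let M_r be the principal minor of A obtained by deleting row r and column r. Then det M_r = Σ_T Π_{(v_j,v_k) ∈ ET} w_{jk}, where the sum is over all directed spanning trees T on vertices {v₁,...,v_n} rooted at v_r (each non-root vertex has exactly one out-edge, oriented toward the root). -/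
open scoped Classical

/-!
Row `j` of `A` is `∑ l, w j l • (δ_j - δ_l)`, so by multilinearity the minor is the sum, over all
ways of choosing one out-edge `f v` for every non-root vertex `v`, of `∏ w v (f v)` times the same
minor for the single functional graph `f`. That minor is `1` when every vertex reaches a root, since
sorting the vertices by distance to the roots makes the matrix unitriangular. Otherwise it is `0`,
since the indicator of the vertices that never reach a root lies in the kernel.
-/

open Finset Function Matrix

section Determinant

variable {ι R : Type*} [Fintype ι] [DecidableEq ι] [CommRing R]

theorem det_one_sub_eq_one_of_strictly_blockTriangular {α : Type*} [LinearOrder α]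
    {B : Matrix ι ι R} (b : ι → α) (hB : ∀ i k, b k ≤ b i → B i k = 0) :
    (1 - B).det = 1 := by
  have triangular : (1 - B).BlockTriangular b :=
    blockTriangular_one.sub fun i k hik => hB i k hik.le
  have diagonal_block (a : α) : (1 - B).toSquareBlock b a = 1 := by
    ext ⟨i, hi⟩ ⟨k, hk⟩
    simp [toSquareBlock_def, Matrix.one_apply, hB i k (hk.trans hi.symm).le]
  rw [triangular.det]
  exact prod_eq_one fun a _ => by rw [diagonal_block, det_one]

theorem det_smul_eq_zero_of_mulVec_eq_zero {M : Matrix ι ι R} {x : ι → R} (hx : M *ᵥ x = 0) :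
    M.det • x = 0 := by
  calc
    M.det • x = (M.adjugate * M) *ᵥ x := by rw [adjugate_mul, smul_mulVec, one_mulVec]
    _ = 0 := by rw [← mulVec_mulVec, hx, mulVec_zero]

theorem det_of_sum_mul {κ : Type*} [Fintype κ] (c : ι → κ → R) (A : ι → κ → ι → R) :
    (Matrix.of fun i k => ∑ l, c i l * A i l k).det =
      ∑ g : ι → κ, (∏ i, c i (g i)) * (Matrix.of fun i => A i (g i)).det := by
  have rows : (Matrix.of fun i k => ∑ l, c i l * A i l k) = fun i => ∑ l, c i l • A i l := by
    ext i k
    simp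
  rw [rows]
  refine ((detRowAlternating (R := R) (n := ι)).toMultilinearMap.map_sum
    fun i l => c i l • A i l).trans (sum_congr rfl fun g _ => ?_)
  exact MultilinearMap.map_smul_univ _ _ _

end Determinant

theorem sum_eq_sum_eqOn_comp_embedding {ι V β M : Type*} [Fintype ι] [Fintype V] [Fintype β]
    [DecidableEq ι] [DecidableEq V] [AddCommMonoid M] (e : ι ↪ V) (h : V → β)
    (F : (ι → β) → M) :
    ∑ g : ι → β, F g = ∑ f : V → β with Set.EqOn f h (Set.range e)ᶜ, F (f ∘ e) := by
  refine sum_nbij' (fun g => extend e g h) (fun f => f ∘ e) ?_ (by simp) ?_ ?_ ?_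
  · exact fun g _ => mem_filter.mpr ⟨mem_univ _, fun v hv => extend_apply' g h v hv⟩
  · exact fun g _ => extend_comp e.injective g h
  · intro f hf
    replace hf : Set.EqOn f h (Set.range e)ᶜ := by simpa using hf
    ext1 v
    by_cases hv : v ∈ Set.range e
    · obtain ⟨i, rfl⟩ := hv
      exact e.injective.extend_apply _ _ i
    · rw [extend_apply' _ _ v hv, hf hv]
  · exact fun g _ => by rw [extend_comp e.injective]

theorem one_submatrix_mulVec_comp {ι V R : Type*} [Fintype ι] [DecidableEq V]
    [NonAssocSemiring R] (g : ι → V) (e : ι ↪ V) {x : V → R}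
    (hx : ∀ v ∉ Set.range e, x v = 0) :
    (1 : Matrix V V R).submatrix g e *ᵥ (x ∘ e) = x ∘ g := by
  ext i
  by_cases hi : g i ∈ Set.range e
  · obtain ⟨k, hk⟩ := hi
    simp [mulVec, dotProduct, Matrix.one_apply, ← hk]
  · have hne (k : ι) : g i ≠ e k := fun h => hi ⟨k, h.symm⟩
    simp [mulVec, dotProduct, hne, hx _ hi]

section FunctionalGraph

variable {V : Type*} {f : V → V} {S : Set V}

/-- The functional graph with edges `v ⟶ f v` for `v ∉ S` is a spanning forest directed towards the
root set `S`. The roots have no out-edge, which is encoded by `f` fixing them. -/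
structure IsRootedForest (f : V → V) (S : Set V) : Prop where
  eqOn_id : Set.EqOn f id S
  exists_iterate_mem : ∀ v, ∃ k : ℕ, f^[k] v ∈ S

theorem isRootedForest_singleton_iff {r : V} :
    IsRootedForest f {r} ↔ f r = r ∧ ∀ v, ∃ k : ℕ, f^[k] v = r :=
  ⟨fun h => ⟨h.eqOn_id rfl, h.exists_iterate_mem⟩,
    fun h => ⟨fun _ hv => hv ▸ h.1, h.2⟩⟩

theorem exists_rank_of_exists_iterate_mem (hf : ∀ v, ∃ k : ℕ, f^[k] v ∈ S) :
    ∃ d : V → ℕ, ∀ v ∉ S, d (f v) < d v := by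
  refine ⟨fun v => Nat.find (hf v), fun v hv => ?_⟩
  have hpos : Nat.find (hf v) ≠ 0 := fun h => hv ((Nat.find_eq_zero (hf v)).mp h)
  obtain ⟨k, hk⟩ := Nat.exists_eq_succ_of_ne_zero hpos
  have hmem : f^[k] (f v) ∈ S := by
    simpa only [hk, iterate_succ_apply] using Nat.find_spec (hf v)
  calc
    Nat.find (hf (f v)) ≤ k := Nat.find_min' (hf (f v)) hmem
    _ < Nat.find (hf v) := hk ▸ k.lt_succ_self

theorem exists_iterate_apply_mem_iff (hf : Set.MapsTo f S S) (v : V) :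
    (∃ k : ℕ, f^[k] (f v) ∈ S) ↔ ∃ k : ℕ, f^[k] v ∈ S := by
  constructor
  · exact fun ⟨k, hk⟩ => ⟨k + 1, hk⟩
  · rintro ⟨k, hk⟩
    exact ⟨k, by simpa only [← iterate_succ_apply, iterate_succ_apply'] using hf hk⟩

end FunctionalGraph

section Laplacian

variable {V R : Type*} [Fintype V] [DecidableEq V]

/-- The Laplacian of the complete digraph with edge weights `w`: weighted out-degrees on the
diagonal, negated weights off it. The weights `w j j` of loops are ignored. -/
def outLaplacian [AddCommGroup R] (w : V → V → R) : Matrix V V R :=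
  Matrix.of fun j k => if j = k then ∑ l ∈ univ.erase j, w j l else -w j k

theorem outLaplacian_apply_eq_sum [NonAssocRing R] (w : V → V → R) (j k : V) :
    outLaplacian w j k =
      ∑ l, w j l * ((1 : Matrix V V R) j k - (1 : Matrix V V R) l k) := by
  rcases eq_or_ne j k with rfl | hjk
  · simp [outLaplacian, Matrix.one_apply, mul_sub, sum_erase_eq_sub]
  · simp [outLaplacian, Matrix.one_apply, hjk]

end Laplacian

section MatrixTree

variable {ι V R : Type*} [Fintype ι] [DecidableEq ι] [DecidableEq V] [CommRing R]

theorem det_one_sub_submatrix_eq_one_of_iterate_mem {f : V → V} {e : ι → V}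
    (hf : ∀ v, ∃ k : ℕ, f^[k] v ∈ (Set.range e)ᶜ) :
    (1 - (1 : Matrix V V R).submatrix (f ∘ e) e).det = 1 := by
  obtain ⟨d, hd⟩ := exists_rank_of_exists_iterate_mem hf
  refine det_one_sub_eq_one_of_strictly_blockTriangular (fun i => OrderDual.toDual (d (e i)))
    fun i k hik => Matrix.one_apply_ne fun (h : f (e i) = e k) => ?_
  have hlt : d (e k) < d (e i) := h ▸ hd (e i) (by simp)
  exact hlt.not_ge hik

theorem det_one_sub_submatrix_eq_zero_of_not_iterate_mem {f : V → V} {e : ι ↪ V}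
    (hfix : Set.MapsTo f (Set.range e)ᶜ (Set.range e)ᶜ)
    (hf : ¬ ∀ v, ∃ k : ℕ, f^[k] v ∈ (Set.range e)ᶜ) :
    (1 - (1 : Matrix V V R).submatrix (f ∘ e) e).det = 0 := by
  let x : V → R := fun v => if ∃ k : ℕ, f^[k] v ∈ (Set.range e)ᶜ then 0 else 1
  have hx_root : ∀ v ∉ Set.range e, x v = 0 := fun v hv => if_pos ⟨0, hv⟩
  have hx_invariant : x ∘ f = x := by
    ext v
    simp only [x, Function.comp_apply, exists_iterate_apply_mem_iff hfix]
  have hker : (1 - (1 : Matrix V V R).submatrix (f ∘ e) e) *ᵥ (x ∘ e) = 0 := by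
    rw [sub_mulVec, one_mulVec, one_submatrix_mulVec_comp _ e hx_root, ← comp_assoc,
      hx_invariant, sub_self]
  obtain ⟨v, hv⟩ := not_forall.mp hf
  obtain ⟨i, rfl⟩ : v ∈ Set.range e := by
    by_contra hroot
    exact hv ⟨0, hroot⟩
  have hxi : x (e i) = 1 := if_neg hv
  simpa [hxi] using congrFun (det_smul_eq_zero_of_mulVec_eq_zero hker) i

theorem det_one_sub_submatrix_eq_ite {f : V → V} {e : ι ↪ V}
    (hfix : Set.EqOn f id (Set.range e)ᶜ) :
    (1 - (1 : Matrix V V R).submatrix (f ∘ e) e).det =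
      if IsRootedForest f (Set.range e)ᶜ then 1 else 0 := by
  split_ifs with hf
  · exact det_one_sub_submatrix_eq_one_of_iterate_mem hf.exists_iterate_mem
  · have hmaps : Set.MapsTo f (Set.range e)ᶜ (Set.range e)ᶜ :=
      (Set.mapsTo_id _).congr hfix.symm
    exact det_one_sub_submatrix_eq_zero_of_not_iterate_mem hmaps fun h => hf ⟨hfix, h⟩

variable [Fintype V]

theorem det_submatrix_outLaplacian_eq_sum (w : V → V → R) (e : ι ↪ V) :
    ((outLaplacian w).submatrix e e).det =
      ∑ g : ι → V, (∏ i, w (e i) (g i)) * (1 - (1 : Matrix V V R).submatrix g e).det := by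
  have entries : (outLaplacian w).submatrix e e = Matrix.of fun i k =>
      ∑ l, w (e i) l * ((1 : Matrix ι ι R) i k - (1 : Matrix V V R) l (e k)) := by
    ext i k
    simp [outLaplacian_apply_eq_sum, Matrix.one_apply]
  rw [entries]
  exact det_of_sum_mul _ fun i l k => (1 : Matrix ι ι R) i k - (1 : Matrix V V R) l (e k)

theorem stmt_19_general (w : V → V → R) (e : ι ↪ V) :
    ((outLaplacian w).submatrix e e).det =
      ∑ f : V → V with IsRootedForest f (Set.range e)ᶜ, ∏ i, w (e i) (f (e i)) := by
  calc
    _ = ∑ f : V → V with Set.EqOn f id (Set.range e)ᶜ, (∏ i, w (e i) (f (e i))) *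
          (1 - (1 : Matrix V V R).submatrix (f ∘ e) e).det := by
      rw [det_submatrix_outLaplacian_eq_sum, sum_eq_sum_eqOn_comp_embedding e id]
      rfl
    _ = ∑ f : V → V with Set.EqOn f id (Set.range e)ᶜ,
          if IsRootedForest f (Set.range e)ᶜ then ∏ i, w (e i) (f (e i)) else 0 := by
      refine sum_congr rfl fun f hf => ?_
      rw [det_one_sub_submatrix_eq_ite (mem_filter.mp hf).2, mul_ite, mul_one, mul_zero]
    _ = ∑ f : V → V with IsRootedForest f (Set.range e)ᶜ, ∏ i, w (e i) (f (e i)) := by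
      rw [← sum_filter, filter_filter]
      exact sum_congr (filter_congr fun f _ => and_iff_right_of_imp (·.eqOn_id)) fun _ _ => rfl

end MatrixTree

theorem prod_univ_erase_eq_prod_succAbove {M : Type*} [CommMonoid M] {n : ℕ} (r : Fin (n + 1))
    (F : Fin (n + 1) → M) : ∏ v ∈ univ.erase r, F v = ∏ i, F (r.succAbove i) := by
  rw [← compl_singleton, ← Fin.image_succAbove_univ,
    prod_image Fin.succAbove_right_injective.injOn]

/-- Tutte's directed matrix-tree theorem: with `A_{jk} = -w_{jk}` for `j ≠ k`
and `A_{jj} = ∑_{l ≠ j} w_{jl}`, the principal minor of `A` obtained by deleting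
row and column `r` has determinant `∑_T ∏_{(v_j,v_k) ∈ ET} w_{jk}`, the sum being
over all directed spanning trees rooted at `r` (encoded as maps `f` sending each
non-root vertex to the head of its unique out-edge, every vertex eventually
reaching the root under iteration). -/
theorem stmt_19 (n : ℕ) (R : Type*) [CommRing R]
    (w : Fin (n + 1) → Fin (n + 1) → R) (r : Fin (n + 1)) :
    ((Matrix.of fun j k : Fin (n + 1) =>
        if j = k then ∑ l ∈ Finset.univ.erase j, w j l else -w j k).submatrix
        r.succAbove r.succAbove).det =
      ∑ f ∈ Finset.univ.filter
          (fun f : Fin (n + 1) → Fin (n + 1) =>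
            f r = r ∧ ∀ v, ∃ k : ℕ, f^[k] v = r),
        ∏ v ∈ Finset.univ.erase r, w v (f v) := by
  simp only [prod_univ_erase_eq_prod_succAbove, ← isRootedForest_singleton_iff]
  simpa only [outLaplacian, Fin.coe_succAboveEmb, Fin.range_succAbove, compl_compl] using
    stmt_19_general w r.succAboveEmb
end
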